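/- For every integer k ≥ 1 there exists an integer N = R_s(k) such that for every n ≥ N, no Condorcet domain on an n-element set is (k, s)-abundant for any s > 2^{k-1}; equivalently, every Condorcet domain D on an n-element set X with n ≥ N has a k-element subset A ⊆ X such that the restriction of D to A contains at most 2^{k-1} distinct linear orders. -/

import Mathlib

/-- `r` is a strict total order on `X`, supported on `X` (i.e. `r` never relates
elements outside `X`). -/
def IsLinearOrderOn {α : Type*} (X : Set α) (r : α → α → Prop) : Prop :=
  (∀ a b, r a b → a ∈ X ∧ b ∈ X) ∧
  (∀ a ∈ X, ¬ r a a) ∧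
  (∀ a ∈ X, ∀ b ∈ X, ∀ c ∈ X, r a b → r b c → r a c) ∧
  (∀ a ∈ X, ∀ b ∈ X, a ≠ b → r a b ∨ r b a)

/-- A domain on `X` is a set of linear orders on `X`. -/
def IsDomainOn {α : Type*} (X : Set α) (D : Set (α → α → Prop)) : Prop :=
  ∀ r ∈ D, IsLinearOrderOn X r

/-- The restriction of the order `r` to the subset `A`. -/
def restrictRel {α : Type*} (A : Set α) (r : α → α → Prop) : α → α → Prop :=
  fun a b => a ∈ A ∧ b ∈ A ∧ r a b

/-- The restriction of the domain `D` to the subset `A`: the set of linear orders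
on `A` induced by the orders in `D`. -/
def restrictDom {α : Type*} (A : Set α) (D : Set (α → α → Prop)) :
    Set (α → α → Prop) :=
  restrictRel A '' D

/-- `D` is `(k,s)`-abundant on `X`: its restriction to every `k`-element subset of `X`
contains at least `s` distinct linear orders. -/
def IsAbundant {α : Type*} (X : Set α) (D : Set (α → α → Prop)) (k s : ℕ) : Prop :=
  ∀ A : Set α, A ⊆ X → A.ncard = k → s ≤ (restrictDom A D).ncard

/-- `D` is exactly `(k,s)`-abundant: `(k,s)`-abundant but not `(k,s+1)`-abundant. -/
def IsExactlyAbundant {α : Type*} (X : Set α) (D : Set (α → α → Prop)) (k s : ℕ) : Prop :=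
  IsAbundant X D k s ∧ ¬ IsAbundant X D k (s + 1)

/-- The number of orders in the profile `R` that rank `a` above `b`. -/
noncomputable def majCount {α : Type*} (R : List (α → α → Prop)) (a b : α) : ℕ :=
  Nat.card {i : Fin R.length // (R.get i) a b}

/-- More than half of the orders in the profile `R` rank `a` above `b`. -/
def MajPrefers {α : Type*} (R : List (α → α → Prop)) (a b : α) : Prop :=
  R.length < 2 * majCount R a b

/-- `D` is a Condorcet domain on `X`: it is a domain on `X` and for every profile
(list of orders from `D`) of odd length, the majority relation is transitive on `X`. -/
def IsCondorcetDomain {α : Type*} (X : Set α) (D : Set (α → α → Prop)) : Prop :=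
  IsDomainOn X D ∧
  ∀ R : List (α → α → Prop), (∀ r ∈ R, r ∈ D) → Odd R.length →
    ∀ a ∈ X, ∀ b ∈ X, ∀ c ∈ X,
      MajPrefers R a b → MajPrefers R b c → MajPrefers R a c

/-- A maximal Condorcet domain on `X`. -/
def IsMaximalCondorcetDomain {α : Type*} (X : Set α) (D : Set (α → α → Prop)) : Prop :=
  IsCondorcetDomain X D ∧
  ∀ D' : Set (α → α → Prop), D ⊆ D' → IsCondorcetDomain X D' → D' = D

/-!
By Sen's theorem, every triple of alternatives in a Condorcet domain satisfies a never condition: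
one of the three is never ranked at one of the three places. Fix a linear order on the alternatives.
Fishburn's label `jNi` (the `j`-th smallest of the triple is never ranked `i`-th) is one of nine
colours, so Ramsey's theorem gives a `k`-element set `A` all of whose triples obey the same `jNi`.

Induction on `A` then bounds the number of orders, each element of `A` at most doubling it.
Let `a` and `b` be the least and the greatest element of `A`. If `j` is `1` (or `3`), then `a`
(or `b`) has at most two possible places in `A`, and an order is determined by the place of one
element and its restriction to the others. If `j` is `2`, then in all orders with `a` above `b`
the alternative `a` is on top (`i = 1`), or `a` and `b` are adjacent (`i = 2`), or `b` is at the
bottom (`i = 3`); in each case deleting one of `a`, `b` loses no information, and likewise for the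
orders with `b` above `a`.
-/

open Finset

universe u

section Ramsey

variable {α : Type u} {C : Type*}

/-- Every `r`-element subset of `T` has colour `c` under the colouring `f`. Only the values of `f`
on `r`-element sets matter. -/
def IsMonochromatic (f : Finset α → C) (r : ℕ) (c : C) (T : Finset α) : Prop :=
  ∀ e ⊆ T, #e = r → f e = c

theorem IsMonochromatic.mono {f : Finset α → C} {r : ℕ} {c : C} {S T : Finset α}
    (hT : IsMonochromatic f r c T) (hST : S ⊆ T) : IsMonochromatic f r c S :=
  fun e he => hT e (he.trans hST)

theorem IsMonochromatic.insert [DecidableEq α] {f : Finset α → C} {r : ℕ} {c : C} {p : α}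
    {T : Finset α} (hT : IsMonochromatic f (r + 1) c T)
    (hlink : IsMonochromatic (fun e => f (insert p e)) r c T) :
    IsMonochromatic f (r + 1) c (insert p T) := by
  intro e he hcard
  by_cases hpe : p ∈ e
  · rw [← insert_erase hpe]
    exact hlink _ (subset_insert_iff.mp he)
      (by rw [card_erase_of_mem hpe, hcard, Nat.add_sub_cancel])
  · exact hT e ((subset_insert_iff_of_notMem hpe).mp he) hcard

theorem sum_update_pred_lt_sum [Fintype C] [DecidableEq C] (m : C → ℕ) {c : C} (hc : m c ≠ 0) :
    ∑ d, Function.update m c (m c - 1) d < ∑ d, m d := by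
  refine sum_lt_sum (fun d _ => ?_) ⟨c, mem_univ c, ?_⟩
  · by_cases hd : d = c <;> simp [hd]
  · simpa using Nat.sub_one_lt hc

/- The inductive step deletes a point `p`, makes the colour `c` of `insert p e` constant by the
case `r`, and then asks for one point less in the colour `c`, since `p` can be added back to a set
of that colour. -/
theorem exists_card_eq_isMonochromatic [Finite C] (r : ℕ) (m : C → ℕ) :
    ∃ N : ℕ, ∀ (α : Type u) (S : Finset α), N ≤ #S → ∀ f : Finset α → C,
      ∃ c, ∃ T ⊆ S, #T = m c ∧ IsMonochromatic f r c T := by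
  classical
  have := Fintype.ofFinite C
  induction r generalizing m with
  | zero =>
    refine ⟨∑ c, m c, fun α S hS f => ?_⟩
    obtain ⟨T, hTS, hT⟩ := exists_subset_card_eq <|
      (single_le_sum_of_canonicallyOrdered (mem_univ (f ∅))).trans hS
    exact ⟨f ∅, T, hTS, hT, fun e _ he => by rw [card_eq_zero.mp he]⟩
  | succ r ih_uniformity =>
    induction hn : ∑ c, m c using Nat.strong_induction_on generalizing m with
    | _ n ih_sizes =>
    by_cases! hzero : ∃ c, m c = 0
    · obtain ⟨c, hc⟩ := hzero
      refine ⟨0, fun α S _ f => ⟨c, ∅, empty_subset S, by simp [hc], fun e he hcard => ?_⟩⟩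
      simp [subset_empty.mp he] at hcard
    choose N hN using fun c => ih_sizes _ (hn ▸ sum_update_pred_lt_sum m (hzero c)) _ rfl
    obtain ⟨M, hM⟩ := ih_uniformity fun _ => ∑ c, N c
    refine ⟨M + 1, fun α S hS f => ?_⟩
    obtain ⟨p, hp⟩ : S.Nonempty := card_pos.mp (by omega)
    obtain ⟨c, S', hS', hS'card, hlink⟩ := hM α (S.erase p)
      (by rw [card_erase_of_mem hp]; omega) fun e => f (insert p e)
    obtain ⟨d, T, hTS', hTcard, hT⟩ := hN c α S'
      (hS'card ▸ single_le_sum_of_canonicallyOrdered (mem_univ c)) f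
    have hTS : T ⊆ S.erase p := hTS'.trans hS'
    by_cases hdc : d = c
    · subst hdc
      have hpT : p ∉ T := fun h => notMem_erase p S (hTS h)
      refine ⟨d, insert p T, insert_subset hp (hTS.trans (erase_subset p S)), ?_,
        hT.insert (hlink.mono hTS')⟩
      rw [card_insert_of_notMem hpT, hTcard, Function.update_self, Nat.sub_one_add_one (hzero d)]
    · exact ⟨d, T, hTS.trans (erase_subset p S), by rw [hTcard, Function.update_of_ne hdc], hT⟩

theorem exists_card_eq_forall_strictMono (C : Type*) [Finite C] [Nonempty C] (r m : ℕ) :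
    ∃ N : ℕ, ∀ (α : Type u) [LinearOrder α] (S : Finset α), N ≤ #S →
      ∀ P : C → (Fin r → α) → Prop,
        (∀ v : Fin r → α, StrictMono v → (∀ i, v i ∈ S) → ∃ c, P c v) →
        ∃ c, ∃ T ⊆ S, #T = m ∧ ∀ v : Fin r → α, StrictMono v → (∀ i, v i ∈ T) → P c v := by
  obtain ⟨N, hN⟩ := exists_card_eq_isMonochromatic r fun _ : C => m
  refine ⟨N, fun α _ S hS P hP => ?_⟩
  have hcolour (e : Finset α) : ∃ c, ∀ v : Fin r → α, StrictMono v → (∀ i, v i ∈ S) →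
      Set.range v = e → P c v := by
    by_cases he : ∃ v : Fin r → α, StrictMono v ∧ (∀ i, v i ∈ S) ∧ Set.range v = e
    · obtain ⟨v, hv, hvS, hve⟩ := he
      obtain ⟨c, hc⟩ := hP v hv hvS
      refine ⟨c, fun w hw _ hwe => ?_⟩
      rwa [(hw.range_inj hv).mp (hwe.trans hve.symm)]
    · exact ⟨Classical.arbitrary C, fun v hv hvS hve => absurd ⟨v, hv, hvS, hve⟩ he⟩
  choose f hf using hcolour
  obtain ⟨c, T, hTS, hTcard, hT⟩ := hN α S hS f
  refine ⟨c, T, hTS, hTcard, fun v hv hvT => ?_⟩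
  rw [← hT (univ.image v) (image_subset_iff.mpr fun i _ => hvT i)
    (by rw [card_image_of_injective _ hv.injective, card_fin])]
  exact hf _ v hv (fun i => hTS (hvT i)) (by simp)

end Ramsey

section Restriction

variable {α : Type u} {X A : Set α} {r r' : α → α → Prop} {D : Set (α → α → Prop)} {a b : α}

namespace IsLinearOrderOn

theorem irrefl (hr : IsLinearOrderOn X r) (a : α) : ¬ r a a :=
  fun h => hr.2.1 a (hr.1 a a h).1 h

theorem trans (hr : IsLinearOrderOn X r) {a b c : α} (hab : r a b) (hbc : r b c) : r a c :=
  hr.2.2.1 a (hr.1 a b hab).1 b (hr.1 a b hab).2 c (hr.1 b c hbc).2 hab hbc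

theorem asymm (hr : IsLinearOrderOn X r) (hab : r a b) : ¬ r b a :=
  fun hba => hr.irrefl a (hr.trans hab hba)

theorem ne (hr : IsLinearOrderOn X r) (hab : r a b) : a ≠ b :=
  fun h => hr.irrefl b (h ▸ hab)

theorem total (hr : IsLinearOrderOn X r) (ha : a ∈ X) (hb : b ∈ X) (hab : a ≠ b) :
    r a b ∨ r b a :=
  hr.2.2.2 a ha b hb hab

theorem iff_not_swap (hr : IsLinearOrderOn X r) : r a b ↔ a ∈ X ∧ b ∈ X ∧ a ≠ b ∧ ¬ r b a :=
  ⟨fun h => ⟨(hr.1 a b h).1, (hr.1 a b h).2, hr.ne h, hr.asymm h⟩,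
    fun ⟨ha, hb, hab, hba⟩ => (hr.total ha hb hab).resolve_right hba⟩

protected theorem restrictRel (hr : IsLinearOrderOn X r) (hAX : A ⊆ X) :
    IsLinearOrderOn A (restrictRel A r) :=
  ⟨fun _ _ h => ⟨h.1, h.2.1⟩, fun a _ h => hr.irrefl a h.2.2,
    fun _ _ _ _ _ _ hab hbc => ⟨hab.1, hbc.2.1, hr.trans hab.2.2 hbc.2.2⟩,
    fun _ ha _ hb hab => (hr.total (hAX ha) (hAX hb) hab).imp
      (fun h => ⟨ha, hb, h⟩) fun h => ⟨hb, ha, h⟩⟩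

end IsLinearOrderOn

protected theorem IsDomainOn.restrictDom (hD : IsDomainOn X D) (hAX : A ⊆ X) :
    IsDomainOn A (restrictDom A D) := by
  rintro _ ⟨r, hr, rfl⟩
  exact (hD r hr).restrictRel hAX

theorem IsDomainOn.finite (hD : IsDomainOn A D) (hA : A.Finite) : D.Finite := by
  have hinj : Function.Injective fun (r : α → α → Prop) => {p : α × α | r p.1 p.2} :=
    fun r r' h => funext₂ fun x y => congrArg ((x, y) ∈ ·) h
  refine Set.Finite.of_finite_image ((hA.prod hA).finite_subsets.subset ?_) hinj.injOn
  rintro _ ⟨r, hr, rfl⟩ ⟨x, y⟩ hxy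
  exact (hD r hr).1 x y hxy

/-- The place of `a` in the order `r`, counted from `0` at the top: the number of alternatives
that `r` ranks above `a`. -/
noncomputable def place (r : α → α → Prop) (a : α) : ℕ := {x | r x a}.ncard

theorem IsLinearOrderOn.place_add_ncard_below (hr : IsLinearOrderOn A r) (hA : A.Finite)
    (ha : a ∈ A) : place r a + {x | r a x}.ncard = A.ncard - 1 := by
  have hunion : {x | r x a} ∪ {x | r a x} = A \ {a} := by
    ext x
    constructor
    · rintro (h | h)
      · exact ⟨(hr.1 x a h).1, hr.ne h⟩
      · exact ⟨(hr.1 a x h).2, (hr.ne h).symm⟩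
    · rintro ⟨hx, hxa⟩
      exact hr.total hx ha hxa
  have hdisj : Disjoint {x | r x a} {x | r a x} :=
    Set.disjoint_left.mpr fun x hxa hax => hr.asymm hxa hax
  rw [place, ← Set.ncard_union_eq hdisj (hA.subset fun x h => (hr.1 x a h).1)
    (hA.subset fun x h => (hr.1 a x h).2), hunion, Set.ncard_sdiff_singleton_of_mem ha]

theorem iff_of_restrictRel_diff_singleton_eq
    (h : restrictRel (A \ {a}) r = restrictRel (A \ {a}) r') {x y : α}
    (hx : x ∈ A) (hxa : x ≠ a) (hy : y ∈ A) (hya : y ≠ a) : r x y ↔ r' x y := by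
  have hxy := congrFun₂ h x y
  simpa [restrictRel, hx, hxa, hy, hya] using hxy

theorem IsLinearOrderOn.above_subset_or_superset
    (hr : IsLinearOrderOn A r) (hr' : IsLinearOrderOn A r')
    (ha : a ∈ A) (h : restrictRel (A \ {a}) r = restrictRel (A \ {a}) r') :
    {x | r x a} ⊆ {x | r' x a} ∨ {x | r' x a} ⊆ {x | r x a} := by
  by_contra! hne
  obtain ⟨x, hxa, hxa'⟩ := Set.not_subset.mp hne.1
  obtain ⟨y, hya', hya⟩ := Set.not_subset.mp hne.2
  obtain ⟨hxA, hx⟩ : x ∈ A ∧ x ≠ a := ⟨(hr.1 x a hxa).1, hr.ne hxa⟩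
  obtain ⟨hyA, hy⟩ : y ∈ A ∧ y ≠ a := ⟨(hr'.1 y a hya').1, hr'.ne hya'⟩
  have hxy : r x y := hr.trans hxa ((hr.total hyA ha hy).resolve_left hya)
  have hyx' : r' y x := hr'.trans hya' ((hr'.total hxA ha hx).resolve_left hxa')
  exact hr'.asymm hyx' ((iff_of_restrictRel_diff_singleton_eq h hxA hx hyA hy).mp hxy)

theorem IsLinearOrderOn.eq_of_place_eq (hr : IsLinearOrderOn A r) (hr' : IsLinearOrderOn A r')
    (hA : A.Finite) (ha : a ∈ A) (h : restrictRel (A \ {a}) r = restrictRel (A \ {a}) r')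
    (hplace : place r a = place r' a) : r = r' := by
  have habove : {x | r x a} = {x | r' x a} := by
    rcases hr.above_subset_or_superset hr' ha h with hsub | hsub
    · exact Set.eq_of_subset_of_ncard_le hsub hplace.ge (hA.subset fun x hx => (hr'.1 x a hx).1)
    · exact (Set.eq_of_subset_of_ncard_le hsub hplace.le
        (hA.subset fun x hx => (hr.1 x a hx).1)).symm
  have habove_iff (x : α) : r x a ↔ r' x a := Set.ext_iff.mp habove x
  ext x y
  by_cases hya : y = a
  · exact hya ▸ habove_iff x
  by_cases hxa : x = a
  · rw [hr.iff_not_swap, hr'.iff_not_swap, hxa, habove_iff y]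
  · by_cases hxy : x ∈ A ∧ y ∈ A
    · exact iff_of_restrictRel_diff_singleton_eq h hxy.1 hxa hxy.2 hya
    · exact iff_of_false (fun h => hxy (hr.1 x y h)) fun h => hxy (hr'.1 x y h)

theorem IsDomainOn.injOn_restrictRel_of_place_eq (hD : IsDomainOn A D) (hA : A.Finite)
    (ha : a ∈ A) (hplace : ∀ r ∈ D, ∀ r' ∈ D, restrictRel (A \ {a}) r = restrictRel (A \ {a}) r' →
      place r a = place r' a) :
    Set.InjOn (restrictRel (A \ {a})) D :=
  fun r hr r' hr' h => (hD r hr).eq_of_place_eq (hD r' hr') hA ha h (hplace r hr r' hr' h)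

theorem ncard_le_two_mul_of_injOn (hD : D.Finite) {n : ℕ}
    {P Q : (α → α → Prop) → Prop} (hPQ : ∀ r ∈ D, P r ∨ Q r)
    (hP : ∃ B, (restrictDom B D).ncard ≤ n ∧ Set.InjOn (restrictRel B) {r ∈ D | P r})
    (hQ : ∃ B, (restrictDom B D).ncard ≤ n ∧ Set.InjOn (restrictRel B) {r ∈ D | Q r}) :
    D.ncard ≤ 2 * n := by
  have hpiece {R : (α → α → Prop) → Prop}
      (hR : ∃ B, (restrictDom B D).ncard ≤ n ∧ Set.InjOn (restrictRel B) {r ∈ D | R r}) :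
      {r ∈ D | R r}.ncard ≤ n := by
    obtain ⟨B, hB, hinj⟩ := hR
    refine le_trans ?_ hB
    exact Set.ncard_le_ncard_of_injOn _ (fun r hr => Set.mem_image_of_mem _ hr.1) hinj
      (hD.image _)
  calc D.ncard
      ≤ ({r ∈ D | P r} ∪ {r ∈ D | Q r}).ncard :=
        Set.ncard_le_ncard (fun r hr => (hPQ r hr).imp (⟨hr, ·⟩) (⟨hr, ·⟩))
          ((hD.sep _).union (hD.sep _))
    _ ≤ {r ∈ D | P r}.ncard + {r ∈ D | Q r}.ncard := Set.ncard_union_le _ _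
    _ ≤ 2 * n := by linarith [hpiece hP, hpiece hQ]

end Restriction

section NeverConditions

variable {α : Type u} {X A : Set α} {r : α → α → Prop} {D : Set (α → α → Prop)} {a b : α}

/-- The order `r` ranks `x` at place `i` among the three alternatives `x`, `y`, `z`, where the
places are `0` (top), `1` (middle) and `2` (bottom). -/
def RanksAt (r : α → α → Prop) (i : Fin 3) (x y z : α) : Prop :=
  match i with
  | 0 => r x y ∧ r x z
  | 1 => (r y x ∧ r x z) ∨ (r z x ∧ r x y)
  | 2 => r y x ∧ r z x

/-- Fishburn's never condition `jNi`, with `i` and `j` counted from `0`: no order in `D` ranks the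
alternative `v j` at place `i` among `v 0`, `v 1`, `v 2`. The other two alternatives are written
`v (j + 1)` and `v (j + 2)`, with addition modulo `3`. -/
def NeverCondition (D : Set (α → α → Prop)) (j i : Fin 3) (v : Fin 3 → α) : Prop :=
  ∀ r ∈ D, ¬ RanksAt r i (v j) (v (j + 1)) (v (j + 2))

theorem ranksAt_swap {i : Fin 3} {x y z : α} : RanksAt r i x y z ↔ RanksAt r i x z y := by
  match i with
  | 0 | 2 => exact and_comm
  | 1 => exact or_comm

theorem RanksAt.of_restrictRel {i : Fin 3} {x y z : α} (h : RanksAt (restrictRel A r) i x y z) :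
    RanksAt r i x y z := by
  match i with
  | 0 | 2 => exact h.imp (·.2.2) (·.2.2)
  | 1 => exact h.imp (And.imp (·.2.2) (·.2.2)) (And.imp (·.2.2) (·.2.2))

protected theorem NeverCondition.restrictDom {j i : Fin 3} {v : Fin 3 → α}
    (h : NeverCondition D j i v) :
    NeverCondition (restrictDom A D) j i v := by
  rintro _ ⟨r, hr, rfl⟩ hrank
  exact h r hr hrank.of_restrictRel

theorem majPrefers_triple_iff {r₀ r₁ r₂ : α → α → Prop} :
    MajPrefers [r₀, r₁, r₂] a b ↔ (r₀ a b ∧ r₁ a b) ∨ (r₁ a b ∧ r₂ a b) ∨ (r₂ a b ∧ r₀ a b) := by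
  classical
  have hcount : majCount [r₀, r₁, r₂] a b =
      (if r₀ a b then 1 else 0) + (if r₁ a b then 1 else 0) + (if r₂ a b then 1 else 0) := by
    rw [majCount, Nat.card_eq_fintype_card, Fintype.card_subtype, card_filter]
    exact Fin.sum_univ_three fun i : Fin 3 => if ([r₀, r₁, r₂].get i) a b then 1 else 0
  rw [MajPrefers, hcount]
  by_cases h₀ : r₀ a b <;> by_cases h₁ : r₁ a b <;> by_cases h₂ : r₂ a b <;> simp [h₀, h₁, h₂]

namespace IsCondorcetDomain

theorem exists_avoided_rotation (hD : IsCondorcetDomain X D) {v : Fin 3 → α} (hv : ∀ i, v i ∈ X) :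
    ∃ c, ∀ r ∈ D, ¬ (r (v c) (v (c + 1)) ∧ r (v (c + 1)) (v (c + 2))) := by
  by_contra! hrot
  choose R hRD hR using hrot
  have h₀₁ : MajPrefers [R 0, R 1, R 2] (v 0) (v 1) :=
    majPrefers_triple_iff.mpr (.inr (.inr ⟨(hR 2).2, (hR 0).1⟩))
  have h₁₂ : MajPrefers [R 0, R 1, R 2] (v 1) (v 2) :=
    majPrefers_triple_iff.mpr (.inl ⟨(hR 0).2, (hR 1).1⟩)
  have h₀₂ := hD.2 _ (by simp [hRD]) ⟨1, rfl⟩ _ (hv 0) _ (hv 1) _ (hv 2) h₀₁ h₁₂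
  have hR₁ : ¬ R 1 (v 0) (v 2) := (hD.1 _ (hRD 1)).asymm (hR 1).2
  have hR₂ : ¬ R 2 (v 0) (v 2) := (hD.1 _ (hRD 2)).asymm (hR 2).1
  have := majPrefers_triple_iff.mp h₀₂
  tauto

theorem exists_neverCondition (hD : IsCondorcetDomain X D) {v : Fin 3 → α}
    (hinj : Function.Injective v) (hv : ∀ i, v i ∈ X) : ∃ j i, NeverCondition D j i v := by
  obtain ⟨c, hc⟩ := hD.exists_avoided_rotation hv
  obtain ⟨d, hd⟩ := hD.exists_avoided_rotation (v := fun k => v (-k)) fun i => hv (-i)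
  have htotal (r) (hr : r ∈ D) {k l : Fin 3} (hkl : k ≠ l) : r (v k) (v l) ∨ r (v l) (v k) :=
    (hD.1 r hr).total (hv k) (hv l) (hinj.ne hkl)
  -- The orders `c, c + 1, c + 2` and `-d, -d - 1, -d - 2` of the indices are missing, and they are
  -- the two orders that have `d - c` at place `c + d`.
  refine ⟨d - c, c + d, fun r hr hrank => ?_⟩
  have hcr := hc r hr
  have hdr := hd r hr
  have h₀₁ := htotal r hr (k := 0) (l := 1) (by decide)
  have h₁₂ := htotal r hr (k := 1) (l := 2) (by decide)
  have h₂₀ := htotal r hr (k := 2) (l := 0) (by decide)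
  fin_cases c <;> fin_cases d <;>
    simp only [RanksAt, Fin.zero_eta, Fin.mk_one, Fin.reduceFinMk, Fin.reduceAdd, Fin.reduceSub,
      neg_zero, zero_add, add_zero, sub_zero, zero_sub, sub_self, neg_add_cancel]
      at hcr hdr hrank <;>
    tauto

end IsCondorcetDomain

end NeverConditions

section Counting

variable {α : Type u} {A : Set α} {r : α → α → Prop} {D : Set (α → α → Prop)} {a b : α}

theorem IsLinearOrderOn.place_le_one_of_not_bottom (hr : IsLinearOrderOn A r) (hA : A.Finite)
    (hnever : ∀ y ∈ A, ∀ z ∈ A, y ≠ a → z ≠ a → y ≠ z → ¬ RanksAt r 2 a y z) :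
    place r a ≤ 1 := by
  refine (Set.ncard_le_one (hA.subset fun x hx => (hr.1 x a hx).1)).mpr fun y hy z hz => ?_
  by_contra hyz
  exact hnever y (hr.1 y a hy).1 z (hr.1 z a hz).1 (hr.ne hy) (hr.ne hz) hyz ⟨hy, hz⟩

theorem IsLinearOrderOn.ncard_below_le_one_of_not_top (hr : IsLinearOrderOn A r) (hA : A.Finite)
    (hnever : ∀ y ∈ A, ∀ z ∈ A, y ≠ a → z ≠ a → y ≠ z → ¬ RanksAt r 0 a y z) :
    {x | r a x}.ncard ≤ 1 := by
  refine (Set.ncard_le_one (hA.subset fun x hx => (hr.1 a x hx).2)).mpr fun y hy z hz => ?_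
  by_contra hyz
  exact hnever y (hr.1 a y hy).2 z (hr.1 a z hz).2 (hr.ne hy).symm (hr.ne hz).symm hyz ⟨hy, hz⟩

theorem IsLinearOrderOn.above_eq_empty_or_below_eq_empty_of_not_middle (hr : IsLinearOrderOn A r)
    (hnever : ∀ y ∈ A, ∀ z ∈ A, y ≠ a → z ≠ a → y ≠ z → ¬ RanksAt r 1 a y z) :
    {x | r x a} = ∅ ∨ {x | r a x} = ∅ := by
  by_contra! hne
  obtain ⟨⟨y, hya⟩, ⟨z, haz⟩⟩ := hne
  exact hnever y (hr.1 y a hya).1 z (hr.1 a z haz).2 (hr.ne hya) (hr.ne haz).symm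
    (hr.ne (hr.trans hya haz)) (.inl ⟨hya, haz⟩)

theorem IsDomainOn.exists_place_eq_or_eq (hD : IsDomainOn A D) (hA : A.Finite) (ha : a ∈ A)
    {i : Fin 3} (hnever : ∀ r ∈ D, ∀ y ∈ A, ∀ z ∈ A, y ≠ a → z ≠ a → y ≠ z → ¬ RanksAt r i a y z) :
    ∃ p q, ∀ r ∈ D, place r a = p ∨ place r a = q := by
  match i with
  | 0 =>
    refine ⟨A.ncard - 1, A.ncard - 2, fun r hr => ?_⟩
    have hbelow := (hD r hr).ncard_below_le_one_of_not_top hA (hnever r hr)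
    have hsum := (hD r hr).place_add_ncard_below hA ha
    omega
  | 1 =>
    refine ⟨0, A.ncard - 1, fun r hr => ?_⟩
    have hsum := (hD r hr).place_add_ncard_below hA ha
    rcases (hD r hr).above_eq_empty_or_below_eq_empty_of_not_middle (hnever r hr) with h | h
    · exact .inl (by rw [place, h, Set.ncard_empty])
    · exact .inr (by rwa [h, Set.ncard_empty] at hsum)
  | 2 =>
    refine ⟨0, 1, fun r hr => ?_⟩
    have hplace := (hD r hr).place_le_one_of_not_bottom hA (hnever r hr)
    omega

theorem IsDomainOn.ncard_le_two_mul_of_never (hD : IsDomainOn A D) (hA : A.Finite) (ha : a ∈ A)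
    {i : Fin 3} (hnever : ∀ r ∈ D, ∀ y ∈ A, ∀ z ∈ A, y ≠ a → z ≠ a → y ≠ z → ¬ RanksAt r i a y z) :
    D.ncard ≤ 2 * (restrictDom (A \ {a}) D).ncard := by
  obtain ⟨p, q, hpq⟩ := hD.exists_place_eq_or_eq hA ha hnever
  have hinj (p : ℕ) : Set.InjOn (restrictRel (A \ {a})) {r ∈ D | place r a = p} :=
    IsDomainOn.injOn_restrictRel_of_place_eq (fun r hr => hD r hr.1) hA ha
      fun r hr r' hr' _ => hr.2.trans hr'.2.symm
  exact ncard_le_two_mul_of_injOn (hD.finite hA) hpq ⟨_, le_rfl, hinj p⟩ ⟨_, le_rfl, hinj q⟩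

theorem IsLinearOrderOn.place_eq_zero_of_others_not_top (hr : IsLinearOrderOn A r) (hab : r a b)
    (hnever : ∀ y ∈ A, y ≠ a → y ≠ b → ¬ RanksAt r 0 y a b) : place r a = 0 := by
  have habove : {x | r x a} = ∅ := Set.eq_empty_of_forall_notMem fun x hxa =>
    hnever x (hr.1 x a hxa).1 (hr.ne hxa) (hr.ne (hr.trans hxa hab)) ⟨hxa, hr.trans hxa hab⟩
  rw [place, habove, Set.ncard_empty]

theorem IsLinearOrderOn.place_eq_ncard_sub_one_of_others_not_bottom (hr : IsLinearOrderOn A r)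
    (hA : A.Finite) (hab : r a b) (hnever : ∀ y ∈ A, y ≠ a → y ≠ b → ¬ RanksAt r 2 y a b) :
    place r b = A.ncard - 1 := by
  have hbelow : {x | r b x} = ∅ := Set.eq_empty_of_forall_notMem fun x hbx =>
    hnever x (hr.1 b x hbx).2 (hr.ne (hr.trans hab hbx)).symm (hr.ne hbx).symm
      ⟨hr.trans hab hbx, hbx⟩
  rw [← hr.place_add_ncard_below hA (hr.1 a b hab).2, hbelow, Set.ncard_empty, add_zero]

theorem IsLinearOrderOn.place_eq_place_restrictRel_of_others_not_middle (hr : IsLinearOrderOn A r)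
    (hab : r a b) (hnever : ∀ y ∈ A, y ≠ a → y ≠ b → ¬ RanksAt r 1 y a b) :
    place r a = place (restrictRel (A \ {a}) r) b := by
  obtain ⟨-, hb⟩ := hr.1 a b hab
  refine congrArg Set.ncard (Set.ext fun x => ⟨fun hxa => ?_, fun ⟨⟨hx, hxa⟩, _, hxb⟩ => ?_⟩)
  · exact ⟨⟨(hr.1 x a hxa).1, hr.ne hxa⟩, ⟨hb, (hr.ne hab).symm⟩, hr.trans hxa hab⟩
  · exact (hr.total hx (hr.1 a b hab).1 hxa).resolve_right
      fun hax => hnever x hx hxa (hr.ne hxb) (.inl ⟨hax, hxb⟩)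

theorem IsDomainOn.injOn_restrictRel_or_of_others_never (hD : IsDomainOn A D) (hA : A.Finite)
    (ha : a ∈ A) (hb : b ∈ A) (hab : ∀ r ∈ D, r a b) {i : Fin 3}
    (hnever : ∀ r ∈ D, ∀ y ∈ A, y ≠ a → y ≠ b → ¬ RanksAt r i y a b) :
    Set.InjOn (restrictRel (A \ {a})) D ∨ Set.InjOn (restrictRel (A \ {b})) D := by
  match i with
  | 0 =>
    have hplace (r) (hr : r ∈ D) :=
      (hD r hr).place_eq_zero_of_others_not_top (hab r hr) (hnever r hr)
    exact .inl <| hD.injOn_restrictRel_of_place_eq hA ha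
      fun r hr r' hr' _ => (hplace r hr).trans (hplace r' hr').symm
  | 1 =>
    have hplace (r) (hr : r ∈ D) :=
      (hD r hr).place_eq_place_restrictRel_of_others_not_middle (hab r hr) (hnever r hr)
    exact .inl <| hD.injOn_restrictRel_of_place_eq hA ha
      fun r hr r' hr' h => by rw [hplace r hr, hplace r' hr', h]
  | 2 =>
    have hplace (r) (hr : r ∈ D) :=
      (hD r hr).place_eq_ncard_sub_one_of_others_not_bottom hA (hab r hr) (hnever r hr)
    exact .inr <| hD.injOn_restrictRel_of_place_eq hA hb
      fun r hr r' hr' _ => (hplace r hr).trans (hplace r' hr').symm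

theorem IsDomainOn.ncard_le_two_mul_of_others_never (hD : IsDomainOn A D) (hA : A.Finite)
    (ha : a ∈ A) (hb : b ∈ A) (hab : a ≠ b) {i : Fin 3}
    (hnever : ∀ r ∈ D, ∀ y ∈ A, y ≠ a → y ≠ b → ¬ RanksAt r i y a b) {n : ℕ}
    (hna : (restrictDom (A \ {a}) D).ncard ≤ n) (hnb : (restrictDom (A \ {b}) D).ncard ≤ n) :
    D.ncard ≤ 2 * n := by
  refine ncard_le_two_mul_of_injOn (hD.finite hA) (fun r hr => (hD r hr).total ha hb hab) ?_ ?_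
  · rcases IsDomainOn.injOn_restrictRel_or_of_others_never (D := {r ∈ D | r a b})
      (fun r hr => hD r hr.1) hA ha hb (fun r hr => hr.2) (fun r hr => hnever r hr.1) with h | h
    exacts [⟨_, hna, h⟩, ⟨_, hnb, h⟩]
  · rcases IsDomainOn.injOn_restrictRel_or_of_others_never (D := {r ∈ D | r b a})
      (fun r hr => hD r hr.1) hA hb ha (fun r hr => hr.2)
      (fun r hr y hy hyb hya h => hnever r hr.1 y hy hya hyb (ranksAt_swap.mp h)) with h | h
    exacts [⟨_, hnb, h⟩, ⟨_, hna, h⟩]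

/-- The never condition `jNi` holds in `D` for all triples in `A`, listed in increasing order. -/
def IsUniformNever [LinearOrder α] (D : Set (α → α → Prop)) (j i : Fin 3) (A : Set α) : Prop :=
  ∀ v : Fin 3 → α, StrictMono v → (∀ k, v k ∈ A) → NeverCondition D j i v

namespace IsUniformNever

variable [LinearOrder α] {j i : Fin 3}

theorem neverCondition_triple (h : IsUniformNever D j i A) {x y z : α} (hx : x ∈ A) (hy : y ∈ A)
    (hz : z ∈ A) (hxy : x < y) (hyz : y < z) : NeverCondition D j i ![x, y, z] :=
  h _ (by simp [hxy, hyz]) (by simp [Fin.forall_fin_succ, hx, hy, hz])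

protected theorem restrictDom {B C : Set α} (h : IsUniformNever D j i A) (hBA : B ⊆ A) :
    IsUniformNever (restrictDom C D) j i B :=
  fun v hv hvB => (h v hv fun k => hBA (hvB k)).restrictDom

theorem not_ranksAt_of_isLeast (h : IsUniformNever D 0 i A) (ha : IsLeast A a) (hr : r ∈ D)
    {y z : α} (hy : y ∈ A) (hz : z ∈ A) (hya : y ≠ a) (hza : z ≠ a) (hyz : y ≠ z) :
    ¬ RanksAt r i a y z := by
  rcases hyz.lt_or_gt with hlt | hlt
  · exact h.neverCondition_triple ha.1 hy hz (lt_of_le_of_ne (ha.2 hy) hya.symm) hlt r hr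
  · rw [ranksAt_swap]
    exact h.neverCondition_triple ha.1 hz hy (lt_of_le_of_ne (ha.2 hz) hza.symm) hlt r hr

theorem not_ranksAt_of_isGreatest (h : IsUniformNever D 2 i A) (hb : IsGreatest A b) (hr : r ∈ D)
    {y z : α} (hy : y ∈ A) (hz : z ∈ A) (hyb : y ≠ b) (hzb : z ≠ b) (hyz : y ≠ z) :
    ¬ RanksAt r i b y z := by
  rcases hyz.lt_or_gt with hlt | hlt
  · exact h.neverCondition_triple hy hz hb.1 hlt (lt_of_le_of_ne (hb.2 hz) hzb) r hr
  · rw [ranksAt_swap]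
    exact h.neverCondition_triple hz hy hb.1 hlt (lt_of_le_of_ne (hb.2 hy) hyb) r hr

theorem not_ranksAt_of_isLeast_of_isGreatest (h : IsUniformNever D 1 i A) (ha : IsLeast A a)
    (hb : IsGreatest A b) (hr : r ∈ D) {y : α} (hy : y ∈ A) (hya : y ≠ a) (hyb : y ≠ b) :
    ¬ RanksAt r i y a b := by
  rw [ranksAt_swap]
  exact h.neverCondition_triple ha.1 hy hb.1 (lt_of_le_of_ne (ha.2 hy) hya.symm)
    (lt_of_le_of_ne (hb.2 hy) hyb) r hr

theorem ncard_le_two_mul (h : IsUniformNever D j i A) (hD : IsDomainOn A D) (hA : A.Finite)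
    (ha : IsLeast A a) (hb : IsGreatest A b) (hab : a ≠ b) {n : ℕ}
    (hna : (restrictDom (A \ {a}) D).ncard ≤ n) (hnb : (restrictDom (A \ {b}) D).ncard ≤ n) :
    D.ncard ≤ 2 * n := by
  match j with
  | 0 =>
    refine (hD.ncard_le_two_mul_of_never (i := i) hA ha.1 fun r hr y hy z hz => ?_).trans
      (Nat.mul_le_mul_left 2 hna)
    exact h.not_ranksAt_of_isLeast ha hr hy hz
  | 1 =>
    refine hD.ncard_le_two_mul_of_others_never (i := i) hA ha.1 hb.1 hab
      (fun r hr y hy => ?_) hna hnb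
    exact h.not_ranksAt_of_isLeast_of_isGreatest ha hb hr hy
  | 2 =>
    refine (hD.ncard_le_two_mul_of_never (i := i) hA hb.1 fun r hr y hy z hz => ?_).trans
      (Nat.mul_le_mul_left 2 hnb)
    exact h.not_ranksAt_of_isGreatest hb hr hy hz

theorem ncard_le_two_pow {n : ℕ} {A : Finset α} (hcard : #A = n + 1)
    (h : IsUniformNever D j i (A : Set α)) (hD : IsDomainOn (A : Set α) D) : D.ncard ≤ 2 ^ n := by
  induction n generalizing A D with
  | zero =>
    obtain ⟨a, rfl⟩ := card_eq_one.mp hcard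
    refine (Set.ncard_le_one (hD.finite (finite_toSet _))).mpr fun r hr r' hr' => ?_
    have hempty (r) (hr : r ∈ D) (x y : α) : ¬ r x y := fun hxy => by
      obtain ⟨hx, hy⟩ := (hD r hr).1 x y hxy
      exact (hD r hr).ne hxy (by simp_all)
    exact funext₂ fun x y => propext (iff_of_false (hempty r hr x y) (hempty r' hr' x y))
  | succ n ih =>
    have hne : A.Nonempty := card_pos.mp (by omega)
    have hdel (x) (hx : x ∈ A) : (restrictDom (A \ {x} : Set α) D).ncard ≤ 2 ^ n := by
      rw [← coe_erase]
      have hsub : (A.erase x : Set α) ⊆ A := coe_subset.mpr (erase_subset x A)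
      exact ih (by rw [card_erase_of_mem hx]; omega) (h.restrictDom hsub) (hD.restrictDom hsub)
    rw [pow_succ']
    exact h.ncard_le_two_mul hD A.finite_toSet (A.isLeast_min' hne) (A.isGreatest_max' hne)
      (A.min'_lt_max'_of_card (by omega)).ne (hdel _ (A.min'_mem hne)) (hdel _ (A.max'_mem hne))

end IsUniformNever

end Counting

theorem abundance_ceiling_general (k : ℕ) :
    ∃ N : ℕ, ∀ (α : Type u) (X : Set α), N ≤ X.encard →
      ∀ D : Set (α → α → Prop), IsCondorcetDomain X D →
        ∃ A : Set α, A ⊆ X ∧ A.ncard = k + 1 ∧ (restrictDom A D).ncard ≤ 2 ^ k := by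
  obtain ⟨N, hN⟩ := exists_card_eq_forall_strictMono (Fin 3 × Fin 3) 3 (k + 1)
  refine ⟨N, fun α X hX D hD => ?_⟩
  let : LinearOrder α := WellOrderingRel.isWellOrder.linearOrder
  obtain ⟨S, hSX, hS⟩ := Set.exists_subset_encard_eq hX
  lift S to Finset α using Set.finite_of_encard_eq_coe hS
  rw [Set.encard_coe_eq_coe_finsetCard, Nat.cast_inj] at hS
  obtain ⟨⟨j, i⟩, A, hAS, hA, hnever⟩ := hN α S hS.ge (fun c v => NeverCondition D c.1 c.2 v)
    fun v hv hvS => Prod.exists.mpr <| hD.exists_neverCondition hv.injective fun k => hSX (hvS k)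
  have hAX : (A : Set α) ⊆ X := (coe_subset.mpr hAS).trans hSX
  have huniform : IsUniformNever D j i (A : Set α) := hnever
  exact ⟨A, hAX, by rw [Set.ncard_coe_finset, hA],
    (huniform.restrictDom subset_rfl).ncard_le_two_pow hA (hD.1.restrictDom hAX)⟩

/-- For every `k ≥ 1` there is an `N` such that on any set of at least `N` alternatives,
no Condorcet domain is `(k,s)`-abundant for any `s > 2^(k-1)`: every Condorcet domain
has a `k`-element subset whose restriction has at most `2^(k-1)` orders. -/
theorem abundance_ceiling (k : ℕ) (hk : 1 ≤ k) :
    ∃ N : ℕ, ∀ (α : Type) (X : Set α), X.Finite → N ≤ X.ncard →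
      ∀ D : Set (α → α → Prop), IsCondorcetDomain X D →
        ∃ A : Set α, A ⊆ X ∧ A.ncard = k ∧ (restrictDom A D).ncard ≤ 2 ^ (k - 1) := by
  obtain ⟨k, rfl⟩ := Nat.exists_eq_add_of_le' hk
  obtain ⟨N, hN⟩ := abundance_ceiling_general k
  exact ⟨N, fun α X hX hcard => hN α X (by rwa [← hX.cast_ncard_eq, Nat.cast_le])⟩
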